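/- For every non-negative integer m and every real ε > 0, there exists t₀ such that for all integers t ≥ t₀ the (m+2)-color Ramsey number of K_t satisfies r(t; m+2) > 2^{((3m/8) + 1/2 − ε)·t}; that is, there exists a coloring of the edges of the complete graph on N = ⌈2^{((3m/8) + 1/2 − ε)·t}⌉ vertices with m+2 colors containing no monochromatic clique of size t. -/

import Mathlib

/-!
A graph `G` without `t`-cliques in which few `t`-tuples of vertices are independent yields good
colorings with `m + 2` colors: choose `m` uniformly random maps from the vertex set to `V(G)`,
give an edge the color `r` if its endpoints are adjacent in `G` after applying the `r`-th map
(for some such `r`), and color the remaining edges at random with the last two colors. The first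
`m` colors never contain a `t`-clique, and the last two are handled by a union bound over all
`t`-sets.

For `G` take `𝔽₂^{2k}` with `2k + 2 ≤ t ≤ 2k + 3`, two vectors being adjacent if a symplectic form
does not vanish on them. A clique has at most `2k + 1` vertices, since its Gram matrix `J - I` has
corank at most one. An independent tuple spans a totally isotropic subspace, so that
choosing its vectors one at a time shows that a random `t`-tuple is independent with probability
at most `2^{-3t²/8 + O(t)}`.
-/

open Finset Module
open LinearMap (BilinForm)

section Density

variable {Ω α β ι ρ : Type*} [Fintype Ω] [Fintype α] [Fintype β] [Fintype ρ]

lemma dens_product (s : Finset α) (t : Finset β) : (s ×ˢ t).dens = s.dens * t.dens := by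
  simp [dens_eq_card_div_card, div_mul_div_comm]

lemma dens_piFinset_const [DecidableEq ρ] (s : Finset α) :
    (Fintype.piFinset fun _ : ρ ↦ s).dens = s.dens ^ Fintype.card ρ := by
  simp [dens_eq_card_div_card, div_pow]

lemma exists_forall_notMem_of_sum_dens_lt_one [Nonempty Ω] {s : Finset ι} {A : ι → Finset Ω}
    (h : ∑ i ∈ s, (A i).dens < 1) : ∃ ω, ∀ i ∈ s, ω ∉ A i := by
  classical
  by_contra! hcover
  have huniv : s.biUnion A = univ := eq_univ_of_forall fun ω ↦ mem_biUnion.2 (hcover ω)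
  have := dens_biUnion_le (s := s) (t := A)
  rw [huniv, dens_univ] at this
  exact h.not_ge this

lemma dens_filter_comp_mem_le [DecidableEq α] [Fintype ι] [DecidableEq ι] (e : ι ↪ α)
    (P : Finset (ι → β)) [DecidablePred fun f : α → β ↦ f ∘ e ∈ P] :
    dens {f : α → β | f ∘ e ∈ P} ≤ P.dens := by
  classical
  let split : (α → β) ≃ (ι → β) × ({a // a ∉ Set.range e} → β) :=
    ((Equiv.ofInjective e e.injective).sumCongr (Equiv.refl _) |>.trans
      (Equiv.sumCompl (· ∈ Set.range e))).arrowCongr (Equiv.refl β) |>.symm.trans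
      (Equiv.sumArrowEquivProdArrow _ _ _)
  have hsplit : ({f : α → β | f ∘ e ∈ P} : Finset _).map split.toEmbedding ⊆ P ×ˢ univ := by
    intro g hg
    obtain ⟨f, hf, rfl⟩ := mem_map.1 hg
    exact mem_product.2 ⟨(mem_filter.1 hf).2, mem_univ _⟩
  calc dens {f : α → β | f ∘ e ∈ P}
      = dens (map split.toEmbedding {f : α → β | f ∘ e ∈ P}) := (dens_map_equiv split).symm
    _ ≤ P.dens * dens univ := (dens_le_dens hsplit).trans_eq (dens_product _ _)
    _ ≤ P.dens := mul_le_of_le_one_right' dens_le_one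

end Density

section Coloring

variable {V α κ κ' ρ : Type*} {t : ℕ}

/-- The edges of the complete graph on `α` can be colored with colors in `κ` so that no clique on
`t` vertices is monochromatic; in terms of Ramsey numbers, `r(t; |κ|) > |α|`. Colorings are
symmetric functions on `α × α`, whose values on the diagonal are irrelevant. -/
def HasCliqueFreeColoring (α κ : Type*) (t : ℕ) : Prop :=
  ∃ χ : α → α → κ, (∀ x y, χ x y = χ y x) ∧
    ¬ ∃ (S : Finset α) (c : κ), #S = t ∧ ∀ x ∈ S, ∀ y ∈ S, x ≠ y → χ x y = c

lemma HasCliqueFreeColoring.of_equiv (e : κ ≃ κ') (h : HasCliqueFreeColoring α κ t) :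
    HasCliqueFreeColoring α κ' t := by
  obtain ⟨χ, hsymm, hfree⟩ := h
  refine ⟨fun x y ↦ e (χ x y), fun x y ↦ congrArg e (hsymm x y), ?_⟩
  rintro ⟨S, c, hS, hc⟩
  exact hfree ⟨S, e.symm c, hS, fun x hx y hy hxy ↦ e.eq_symm_apply.2 (hc x hx y hy hxy)⟩

open Classical in
/-- The probability that `t` independent uniformly random vertices of `G` are pairwise equal or
non-adjacent. -/
noncomputable def indepDensity [Fintype V] (G : SimpleGraph V) (t : ℕ) : ℚ≥0 :=
  dens {f : Fin t → V | G.IsIndepSet (Set.range f)}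

open Classical in
/-- The coloring which gives a pair the color `r` if its image under `F r` is an edge of `G`,
making some choice among such `r`, and falls back on the coloring `c` if there is no such `r`. -/
noncomputable def pullbackColoring (G : SimpleGraph V) (F : ρ → α → V) (c : Sym2 α → κ) (x y : α) :
    ρ ⊕ κ :=
  if h : ∃ r, G.Adj (F r x) (F r y) then .inl h.choose else .inr (c s(x, y))

variable {G : SimpleGraph V} {F : ρ → α → V} {c : Sym2 α → κ} {x y : α}

lemma pullbackColoring_comm : pullbackColoring G F c x y = pullbackColoring G F c y x := by
  have hadj : (fun r ↦ G.Adj (F r x) (F r y)) = fun r ↦ G.Adj (F r y) (F r x) :=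
    funext fun _ ↦ propext (G.adj_comm _ _)
  unfold pullbackColoring
  rw [hadj, Sym2.eq_swap]

lemma adj_of_pullbackColoring_eq_inl {r : ρ} (h : pullbackColoring G F c x y = .inl r) :
    G.Adj (F r x) (F r y) := by
  unfold pullbackColoring at h
  split_ifs at h with hr
  exact Sum.inl_injective h ▸ hr.choose_spec

lemma pullbackColoring_eq_inr_iff {b : κ} :
    pullbackColoring G F c x y = .inr b ↔ (∀ r, ¬ G.Adj (F r x) (F r y)) ∧ c s(x, y) = b := by
  unfold pullbackColoring
  split_ifs with hr <;> simp_all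

lemma card_ne_of_cliqueFree_of_pairwise_adj {f : α → V} {S : Finset α} (hG : G.CliqueFree t)
    (h : ∀ x ∈ S, ∀ y ∈ S, x ≠ y → G.Adj (f x) (f y)) : #S ≠ t := by
  classical
  rintro rfl
  have hinj : Set.InjOn f S := fun x hx y hy hxy ↦ by
    by_contra hne
    exact (h x hx y hy hne).ne hxy
  refine hG (S.image f) ⟨?_, card_image_of_injOn hinj⟩
  rw [coe_image]
  rintro _ ⟨x, hx, rfl⟩ _ ⟨y, hy, rfl⟩ hne
  exact h x hx y hy fun hxy ↦ hne (congrArg f hxy)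

section RandomColoring

variable [Fintype α]

open Classical in
lemma dens_isIndepSet_image_le [Fintype V] (G : SimpleGraph V) (S : Finset α) :
    dens {f : α → V | G.IsIndepSet (f '' S)} ≤ indepDensity G #S := by
  let e : Fin #S ↪ α := S.equivFin.symm.toEmbedding.trans (Function.Embedding.subtype _)
  have hrange : Set.range e = S := by
    simp [e, Function.Embedding.trans, Set.range_comp]
  convert dens_filter_comp_mem_le e {f : Fin #S → V | G.IsIndepSet (Set.range f)} using 3
  · rw [mem_filter_univ, Set.range_comp, hrange]
  · rfl

open Classical in
lemma dens_monochromatic_on_le [Fintype κ] (S : Finset α) :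
    dens {c : Sym2 α → κ | ∃ b, ∀ x ∈ S, ∀ y ∈ S, x ≠ y → c s(x, y) = b} ≤
      Fintype.card κ / Fintype.card κ ^ (#S).choose 2 := by
  let E : Finset (Sym2 α) := S.offDiag.image Sym2.mk.uncurry
  let constant : Finset (E → κ) := univ.image fun b _ ↦ b
  have hE : Fintype.card E = (#S).choose 2 := by
    rw [Fintype.card_coe, Sym2.card_image_offDiag]
  have hconstant : constant.dens ≤ Fintype.card κ / Fintype.card κ ^ (#S).choose 2 := by
    rw [dens_eq_card_div_card, Fintype.card_fun, hE, Nat.cast_pow]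
    gcongr
    exact card_image_le
  refine (dens_le_dens fun c hc ↦ ?_).trans <|
    (dens_filter_comp_mem_le (Function.Embedding.subtype (· ∈ E)) constant).trans hconstant
  obtain ⟨b, hb⟩ := (mem_filter.1 hc).2
  refine mem_filter.2 ⟨mem_univ _, mem_image.2 ⟨b, mem_univ _, funext fun ⟨z, hz⟩ ↦ ?_⟩⟩
  obtain ⟨⟨x, y⟩, hxy, rfl⟩ := mem_image.1 hz
  obtain ⟨hx, hy, hne⟩ := mem_offDiag.1 hxy
  exact (hb x hx y hy hne).symm

theorem hasCliqueFreeColoring_of_indepDensity [Fintype V] [Nonempty V] [Fintype ρ] [Fintype κ]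
    [Nonempty κ] (hG : G.CliqueFree t)
    (h : (Fintype.card α).choose t * (indepDensity G t ^ Fintype.card ρ *
      (Fintype.card κ / Fintype.card κ ^ t.choose 2)) < 1) :
    HasCliqueFreeColoring α (ρ ⊕ κ) t := by
  classical
  let indep (S : Finset α) : Finset (α → V) := {f | G.IsIndepSet (f '' S)}
  let mono (S : Finset α) : Finset (Sym2 α → κ) :=
    {c | ∃ b, ∀ x ∈ S, ∀ y ∈ S, x ≠ y → c s(x, y) = b}
  let bad (S : Finset α) : Finset ((ρ → α → V) × (Sym2 α → κ)) :=
    Fintype.piFinset (fun _ ↦ indep S) ×ˢ mono S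
  have hbad : ∑ S ∈ powersetCard t univ, (bad S).dens < 1 := by
    refine (sum_le_card_nsmul _ _ _ fun S hS ↦ ?_).trans_lt
      (by rwa [card_powersetCard, card_univ, nsmul_eq_mul])
    rw [dens_product, dens_piFinset_const, ← (mem_powersetCard.1 hS).2]
    gcongr
    · exact dens_isIndepSet_image_le G S
    · exact dens_monochromatic_on_le S
  obtain ⟨⟨F, c⟩, hFc⟩ := exists_forall_notMem_of_sum_dens_lt_one hbad
  refine ⟨pullbackColoring G F c, fun _ _ ↦ pullbackColoring_comm, ?_⟩
  rintro ⟨S, r | b, hS, hmono⟩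
  · exact card_ne_of_cliqueFree_of_pairwise_adj hG
      (fun x hx y hy hxy ↦ adj_of_pullbackColoring_eq_inl (hmono x hx y hy hxy)) hS
  · simp only [pullbackColoring_eq_inr_iff] at hmono
    refine hFc S (mem_powersetCard.2 ⟨subset_univ _, hS⟩) (mem_product.2
      ⟨Fintype.mem_piFinset.2 fun r ↦ mem_filter.2 ⟨mem_univ _, ?_⟩,
        mem_filter.2 ⟨mem_univ _, b, fun x hx y hy hxy ↦ (hmono x hx y hy hxy).2⟩⟩)
    rintro _ ⟨x, hx, rfl⟩ _ ⟨y, hy, rfl⟩ hne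
    exact (hmono x hx y hy fun hxy ↦ hne (congrArg (F r) hxy)).1 r

end RandomColoring

end Coloring

section BilinearForm

variable {R M : Type*} [CommRing R] [AddCommGroup M] [Module R M] {B : BilinForm R M}
  {W : Submodule R M} {v x : M}

lemma mem_orthogonal_sup_span_singleton :
    x ∈ B.orthogonal (W ⊔ Submodule.span R {v}) ↔ x ∈ B.orthogonal W ∧ B v x = 0 := by
  refine ⟨fun h ↦ ⟨B.orthogonal_le le_sup_left h,
    h v (Submodule.mem_sup_right (Submodule.mem_span_singleton_self v))⟩, ?_⟩
  rintro ⟨hW, hv⟩ y hy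
  obtain ⟨w, hw, u, hu, rfl⟩ := Submodule.mem_sup.1 hy
  obtain ⟨a, rfl⟩ := Submodule.mem_span_singleton.1 hu
  have hwx : B w x = 0 := hW w hw
  simp [hwx, hv]

lemma sup_span_singleton_le_orthogonal (hB : B.IsRefl) (hW : W ≤ B.orthogonal W)
    (hv : v ∈ B.orthogonal W) (hvv : B v v = 0) :
    W ⊔ Submodule.span R {v} ≤ B.orthogonal (W ⊔ Submodule.span R {v}) := by
  refine sup_le (fun w hw ↦ ?_) ((Submodule.span_singleton_le_iff_mem _ _).2 ?_) <;>
    rw [mem_orthogonal_sup_span_singleton]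
  · exact ⟨hW hw, hB w v (hv w hw)⟩
  · exact ⟨hv, hvv⟩

/-- The graph on a module with an alternating form in which two vectors are adjacent if they are
not orthogonal. -/
def nonorthogonalityGraph (B : BilinForm R M) (hB : B.IsAlt) : SimpleGraph M where
  Adj x y := B x y ≠ 0
  symm := ⟨fun x y h h' ↦ h (hB.isRefl y x h')⟩
  loopless := ⟨fun x h ↦ h (hB x)⟩

section IsotropicTuples

variable {ι : Type*} [Fintype M]

open Classical in
/-- The tuples of vectors, all of them orthogonal to `W`, which span a totally isotropic
subspace. -/
noncomputable def isotropicTuples [Fintype ι] (B : BilinForm R M)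
    (W : Submodule R M) : Finset (ι → M) :=
  {f | (∀ i, f i ∈ B.orthogonal W) ∧ ∀ i j, B (f i) (f j) = 0}

lemma mem_isotropicTuples [Fintype ι] {W : Submodule R M} {f : ι → M} :
    f ∈ isotropicTuples B W ↔ (∀ i, f i ∈ B.orthogonal W) ∧ ∀ i j, B (f i) (f j) = 0 := by
  simp [isotropicTuples]

open Classical in
lemma card_isotropicTuples_succ_le_sum (n : ℕ) (W : Submodule R M) :
    #(isotropicTuples B W : Finset (Fin (n + 1) → M)) ≤
      ∑ v with v ∈ B.orthogonal W ∧ B v v = 0,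
        #(isotropicTuples B (W ⊔ Submodule.span R {v}) : Finset (Fin n → M)) := by
  rw [card_eq_sum_card_fiberwise (f := fun f ↦ f 0) (t := {v | v ∈ B.orthogonal W ∧ B v v = 0})]
  · refine sum_le_sum fun v _ ↦ card_le_card_of_injOn Fin.tail (fun f hf ↦ ?_) ?_
    · obtain ⟨hftuple, rfl⟩ := mem_filter.1 (mem_coe.1 hf)
      obtain ⟨horth, hiso⟩ := mem_isotropicTuples.1 hftuple
      exact mem_isotropicTuples.2 ⟨fun i ↦ mem_orthogonal_sup_span_singleton.2
        ⟨horth i.succ, hiso 0 i.succ⟩, fun i j ↦ hiso i.succ j.succ⟩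
    · intro f hf g hg hfg
      have h0 : f 0 = g 0 := (mem_filter.1 hf).2.trans (mem_filter.1 hg).2.symm
      rw [← Fin.cons_self_tail f, ← Fin.cons_self_tail g, h0, hfg]
  · intro f hf
    have := mem_isotropicTuples.1 (mem_coe.1 hf)
    simpa using ⟨this.1 0, this.2 0 0⟩

end IsotropicTuples

end BilinearForm

section FiniteField

variable {K V : Type*} [Field K] [AddCommGroup V] [Module K V] {B : BilinForm K V}

lemma two_mul_finrank_le_of_le_orthogonal [FiniteDimensional K V] (hB : B.Nondegenerate)
    {W : Submodule K V} (hW : W ≤ B.orthogonal W) : 2 * finrank K W ≤ finrank K V := by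
  have hmono := Submodule.finrank_mono hW
  have horth := LinearMap.BilinForm.finrank_orthogonal hB W
  have hle := Submodule.finrank_le W
  omega

variable [Fintype K] [Fintype V]

open Classical in
lemma card_filter_mem_submodule (W : Submodule K V) :
    #{v | v ∈ W} = Fintype.card K ^ finrank K W := by
  rw [← Module.card_eq_pow_finrank (K := K) (V := W), Fintype.card_subtype]

lemma card_isotropicTuples_succ_le {n b : ℕ} {W : Submodule K V}
    (hb : ∀ v ∈ B.orthogonal W, B v v = 0 → v ∉ W →
      #(isotropicTuples B (W ⊔ Submodule.span K {v}) : Finset (Fin n → V)) ≤ b) :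
    #(isotropicTuples B W : Finset (Fin (n + 1) → V)) ≤
      Fintype.card K ^ finrank K W * #(isotropicTuples B W : Finset (Fin n → V)) +
        Fintype.card K ^ finrank K (B.orthogonal W) * b := by
  classical
  refine (card_isotropicTuples_succ_le_sum n W).trans ?_
  rw [← sum_filter_add_sum_filter_not _ (· ∈ W), ← card_filter_mem_submodule,
    ← card_filter_mem_submodule]
  refine add_le_add ?_ ?_
  · refine (sum_le_card_nsmul _ _ #(isotropicTuples B W : Finset (Fin n → V))
      fun v hv ↦ ?_).trans ?_
    · have hvW : Submodule.span K {v} ≤ W :=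
        (Submodule.span_singleton_le_iff_mem _ _).2 (mem_filter.1 hv).2
      rw [sup_eq_left.2 hvW]
    · rw [smul_eq_mul, filter_filter]
      gcongr with v
      exact And.right
  · refine (sum_le_card_nsmul _ _ b fun v hv ↦ ?_).trans ?_
    · simp only [mem_filter, mem_univ, true_and] at hv
      exact hb v hv.1.1 hv.1.2 hv.2
    · rw [smul_eq_mul, filter_filter]
      gcongr with v
      exact fun hv ↦ hv.1.1

lemma card_isotropicTuples_le (hB : B.Nondegenerate) (hrefl : B.IsRefl) {k : ℕ}
    (hk : finrank K V ≤ 2 * k) (n : ℕ) {W : Submodule K V} (hW : W ≤ B.orthogonal W) :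
    #(isotropicTuples B W : Finset (Fin n → V)) ≤
      2 ^ n * Fintype.card K ^ (n * k + (k - finrank K W + 1).choose 2) := by
  induction n generalizing W with
  | zero =>
    exact (card_le_one_of_subsingleton _).trans
      (by simpa using Nat.one_le_pow _ _ Fintype.card_pos)
  | succ n ih =>
    set q := Fintype.card K
    have hq : 0 < q := Fintype.card_pos
    have hWk := two_mul_finrank_le_of_le_orthogonal hB hW
    obtain ⟨d, hd⟩ : ∃ d, k = finrank K W + d := Nat.exists_eq_add_of_le (by omega)
    have hchoose : (d + 1).choose 2 = d + d.choose 2 := by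
      rw [Nat.choose_succ_succ' d 1, Nat.choose_one_right]
    have hinside : #(isotropicTuples B W : Finset (Fin n → V)) ≤
        2 ^ n * q ^ (n * k + (d + 1).choose 2) := by
      simpa [hd] using ih hW
    have houtside : ∀ v ∈ B.orthogonal W, B v v = 0 → v ∉ W →
        #(isotropicTuples B (W ⊔ Submodule.span K {v}) : Finset (Fin n → V)) ≤
          2 ^ n * q ^ (n * k + d.choose 2) := by
      intro v hv hvv hvW
      have hle := sup_span_singleton_le_orthogonal hrefl hW hv hvv
      have hrank := two_mul_finrank_le_of_le_orthogonal hB hle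
      have := ih hle
      rw [Submodule.finrank_sup_span_singleton hvW] at hrank this
      rwa [show k - (finrank K W + 1) + 1 = d by omega] at this
    calc #(isotropicTuples B W : Finset (Fin (n + 1) → V))
      _ ≤ q ^ finrank K W * (2 ^ n * q ^ (n * k + (d + 1).choose 2)) +
          q ^ finrank K (B.orthogonal W) * (2 ^ n * q ^ (n * k + d.choose 2)) :=
        (card_isotropicTuples_succ_le houtside).trans (by gcongr)
      _ = 2 ^ n * (q ^ (finrank K W + (n * k + (d + 1).choose 2)) +
          q ^ (finrank K (B.orthogonal W) + (n * k + d.choose 2))) := by ring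
      _ ≤ 2 ^ n * (q ^ ((n + 1) * k + (d + 1).choose 2) +
          q ^ ((n + 1) * k + (d + 1).choose 2)) := by
        have horth := LinearMap.BilinForm.finrank_orthogonal hB W
        refine Nat.mul_le_mul_left _ (add_le_add ?_ ?_) <;>
          exact Nat.pow_le_pow_right hq (by rw [add_mul]; omega)
      _ = 2 ^ (n + 1) * q ^ ((n + 1) * k + (k - finrank K W + 1).choose 2) := by
        rw [show k - finrank K W = d by omega]
        ring

lemma indepDensity_nonorthogonalityGraph_le (hB : B.Nondegenerate) (halt : B.IsAlt) {k : ℕ}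
    (hk : finrank K V = 2 * k) (t : ℕ) :
    indepDensity (nonorthogonalityGraph B halt) t ≤
      2 ^ t * Fintype.card K ^ (t * k + (k + 1).choose 2) / Fintype.card K ^ (2 * k * t) := by
  classical
  have hsub : ({f | (nonorthogonalityGraph B halt).IsIndepSet (Set.range f)} : Finset (Fin t → V)) ⊆
      isotropicTuples B ⊥ := by
    intro f hf
    refine mem_isotropicTuples.2 ⟨fun i ↦ by simp, fun i j ↦ ?_⟩
    by_cases hij : f i = f j
    · rw [hij]
      exact halt (f j)
    · exact not_not.1 ((mem_filter.1 hf).2 ⟨i, rfl⟩ ⟨j, rfl⟩ hij)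
  have hcard := card_isotropicTuples_le hB halt.isRefl hk.le t bot_le
  rw [finrank_bot, Nat.sub_zero] at hcard
  refine (dens_le_dens hsub).trans ?_
  rw [dens_eq_card_div_card, Fintype.card_fun, Fintype.card_fin,
    Module.card_eq_pow_finrank (K := K) (V := V), hk, ← pow_mul, Nat.cast_pow]
  gcongr
  exact_mod_cast hcard

end FiniteField

section SymplecticGraph

lemma card_le_finrank_add_one_of_pairwise_eq_one {K V ι : Type*} [Field K] [AddCommGroup V]
    [Module K V] [FiniteDimensional K V] [Fintype ι] {B : BilinForm K V} {f : ι → V}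
    (hself : ∀ i, B (f i) (f i) = 0) (hf : Pairwise fun i j ↦ B (f i) (f j) = 1) :
    Fintype.card ι ≤ finrank K V + 1 := by
  classical
  let L : (ι → K) →ₗ[K] V × K :=
    (Fintype.linearCombination K f).prod (Fintype.linearCombination K fun _ ↦ 1)
  have hL : LinearMap.ker L = ⊥ := by
    refine LinearMap.ker_eq_bot'.2 fun c hc ↦ funext fun j ↦ ?_
    have hcomb : ∑ i, c i • f i = 0 := congrArg Prod.fst hc
    have hsum : ∑ i, c i = 0 := by
      simpa [L, Fintype.linearCombination_apply] using congrArg Prod.snd hc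
    have hgram : ∑ i, c i * B (f i) (f j) = ∑ i, c i - c j := by
      rw [← add_sum_erase _ _ (mem_univ j), ← add_sum_erase _ c (mem_univ j), hself j,
        mul_zero, zero_add, add_sub_cancel_left]
      exact sum_congr rfl fun i hi ↦ by rw [hf (ne_of_mem_erase hi), mul_one]
    have hzero : ∑ i, c i * B (f i) (f j) = 0 := by
      simpa using congrArg (fun v ↦ B v (f j)) hcomb
    simpa [hsum, hzero] using hgram.symm
  simpa using LinearMap.finrank_le_finrank_of_injective (LinearMap.ker_eq_bot.1 hL)

lemma nonorthogonalityGraph_cliqueFree {V : Type*} [AddCommGroup V] [Module (ZMod 2) V]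
    [FiniteDimensional (ZMod 2) V] {B : BilinForm (ZMod 2) V} (hB : B.IsAlt) {t : ℕ}
    (ht : finrank (ZMod 2) V + 2 ≤ t) : (nonorthogonalityGraph B hB).CliqueFree t := by
  rintro s ⟨hs, rfl⟩
  have hcard := card_le_finrank_add_one_of_pairwise_eq_one (f := ((↑) : s → V)) (B := B)
    (fun x ↦ hB x) fun x y hxy ↦
      Fin.eq_one_of_ne_zero _ (hs x.2 y.2 (Subtype.coe_injective.ne hxy))
  rw [Fintype.card_coe] at hcard
  omega

lemma isAlt_toBilin'_J (l R : Type*) [Fintype l] [DecidableEq l] [CommRing R] :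
    (Matrix.toBilin' (Matrix.J l R)).IsAlt := by
  intro x
  obtain ⟨a, b, rfl⟩ : ∃ a b, x = Sum.elim a b := ⟨_, _, (Sum.elim_comp_inl_inr x).symm⟩
  simp [Matrix.toBilin'_apply', Matrix.J, Matrix.fromBlocks_mulVec, Matrix.neg_mulVec,
    dotProduct_comm]

lemma nondegenerate_toBilin'_J (l K : Type*) [Fintype l] [DecidableEq l] [Field K] :
    (Matrix.toBilin' (Matrix.J l K)).Nondegenerate :=
  LinearMap.BilinForm.nondegenerate_toBilin'_iff_det_ne_zero.2 (Matrix.isUnit_det_J l K).ne_zero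

/-- The graph on `𝔽₂^{2k}` in which two vectors are adjacent if their standard symplectic form is
nonzero. -/
def symplecticGraph (k : ℕ) : SimpleGraph (Fin k ⊕ Fin k → ZMod 2) :=
  nonorthogonalityGraph (Matrix.toBilin' (Matrix.J (Fin k) (ZMod 2))) (isAlt_toBilin'_J _ _)

variable {k t : ℕ}

lemma symplecticGraph_cliqueFree (ht : 2 * k + 2 ≤ t) : (symplecticGraph k).CliqueFree t :=
  nonorthogonalityGraph_cliqueFree _ (by simpa [← two_mul] using ht)

lemma indepDensity_symplecticGraph_le (ht : 2 * k + 2 ≤ t) (ht' : t ≤ 2 * k + 3) :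
    (indepDensity (symplecticGraph k) t : ℝ) ≤ 2 ^ (3 * t - 3 / 8 * t ^ 2 : ℝ) := by
  have hdens : indepDensity (symplecticGraph k) t ≤ _ :=
    indepDensity_nonorthogonalityGraph_le (nondegenerate_toBilin'_J (Fin k) (ZMod 2))
      (isAlt_toBilin'_J _ _) (k := k) (by simp [two_mul]) t
  rw [ZMod.card] at hdens
  have hexp : t + (t * k + (k + 1) * k / 2) - 2 * k * t ≤ (3 * t - 3 / 8 * t ^ 2 : ℝ) := by
    obtain rfl | rfl : t = 2 * k + 2 ∨ t = 2 * k + 3 := by omega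
    all_goals push_cast; linarith [k.cast_nonneg (α := ℝ)]
  calc (indepDensity (symplecticGraph k) t : ℝ)
    _ ≤ 2 ^ t * 2 ^ (t * k + (k + 1).choose 2) / 2 ^ (2 * k * t) :=
      (NNRat.cast_mono hdens).trans_eq (by push_cast; rfl)
    _ = 2 ^ (t + (t * k + (k + 1) * k / 2) - 2 * k * t : ℝ) := by
      simp only [← Real.rpow_natCast]
      rw [← Real.rpow_add two_pos, ← Real.rpow_sub two_pos]
      push_cast [Nat.cast_choose_two]
      ring_nf
    _ ≤ 2 ^ (3 * t - 3 / 8 * t ^ 2 : ℝ) := Real.rpow_le_rpow_of_exponent_le one_le_two hexp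

end SymplecticGraph

theorem hasCliqueFreeColoring_of_card_le_two_rpow {α : Type*} [Fintype α] {m t : ℕ} (ht : 2 ≤ t)
    (hα : (Fintype.card α : ℝ) ≤ 2 ^ ((3 * m / 8 + 1 / 2) * t - (3 * m + 2) : ℝ)) :
    HasCliqueFreeColoring α (Fin (m + 2)) t := by
  obtain ⟨k, hk, hk'⟩ : ∃ k, 2 * k + 2 ≤ t ∧ t ≤ 2 * k + 3 := ⟨(t - 2) / 2, by omega, by omega⟩
  refine (hasCliqueFreeColoring_of_indepDensity (ρ := Fin m) (κ := Fin 2)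
    (symplecticGraph_cliqueFree hk) ?_).of_equiv finSumFinEquiv
  have hchoose : ((Fintype.card α).choose t : ℝ) ≤
      2 ^ (((3 * m / 8 + 1 / 2) * t - (3 * m + 2)) * t : ℝ) := by
    rw [Real.rpow_mul_natCast zero_le_two]
    exact (mod_cast Nat.choose_le_pow _ _ : _ ≤ (Fintype.card α : ℝ) ^ t).trans (by gcongr)
  have hindep : (indepDensity (symplecticGraph k) t : ℝ) ^ m ≤
      2 ^ ((3 * t - 3 / 8 * t ^ 2) * m : ℝ) := by
    rw [Real.rpow_mul_natCast zero_le_two]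
    exact pow_le_pow_left₀ (NNRat.cast_nonneg _) (indepDensity_symplecticGraph_le hk hk') m
  have hmono : (2 / 2 ^ t.choose 2 : ℝ) = 2 ^ (1 - t * (t - 1) / 2 : ℝ) := by
    rw [Real.rpow_sub two_pos, Real.rpow_one, ← Nat.cast_choose_two, Real.rpow_natCast]
  have ht0 : (2 : ℝ) ≤ t := mod_cast ht
  rw [← NNRat.cast_lt (K := ℝ)]
  push_cast [Fintype.card_fin]
  calc ((Fintype.card α).choose t : ℝ) *
        (indepDensity (symplecticGraph k) t ^ m * (2 / 2 ^ t.choose 2))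
    _ ≤ 2 ^ (((3 * m / 8 + 1 / 2) * t - (3 * m + 2)) * t : ℝ) *
        (2 ^ ((3 * t - 3 / 8 * t ^ 2) * m : ℝ) * 2 ^ (1 - t * (t - 1) / 2 : ℝ)) := by
      rw [hmono]
      gcongr
    _ = 2 ^ (1 - 3 / 2 * t : ℝ) := by
      rw [← Real.rpow_add two_pos, ← Real.rpow_add two_pos]
      ring_nf
    _ < 1 := Real.rpow_lt_one_of_one_lt_of_neg one_lt_two (by linarith)

lemma natCeil_two_rpow_le {x y : ℝ} (hxy : x ≤ y) (hy : -1 ≤ y) :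
    (⌈(2 : ℝ) ^ x⌉₊ : ℝ) ≤ 2 ^ (y + 1) := by
  have hhalf : (2 : ℝ)⁻¹ ≤ 2 ^ y := by
    rw [← Real.rpow_neg_one]
    exact Real.rpow_le_rpow_of_exponent_le one_le_two hy
  calc (⌈(2 : ℝ) ^ x⌉₊ : ℝ)
    _ ≤ ⌈(2 : ℝ) ^ y⌉₊ := by gcongr; exact one_le_two
    _ ≤ 2 * 2 ^ y := Nat.ceil_le_two_mul hhalf
    _ = 2 ^ (y + 1) := by rw [Real.rpow_add_one two_ne_zero, mul_comm]

/-- For every non-negative integer `m` and every `ε > 0`, there is `t₀` such that for all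
`t ≥ t₀`, the `(m+2)`-color Ramsey number satisfies `r(t;m+2) > 2^{((3m/8) + 1/2 - ε) t}`:
there is an `(m+2)`-coloring of the edges of the complete graph on
`⌈2^{((3m/8) + 1/2 - ε) t}⌉` vertices with no monochromatic clique of size `t`. -/
theorem ramsey_lower_bound_m_plus_two (m : ℕ) (ε : ℝ) (hε : 0 < ε) :
    ∃ t₀ : ℕ, ∀ t : ℕ, t₀ ≤ t →
      ∃ χ : Fin (⌈(2 : ℝ) ^ (((3 * m : ℝ) / 8 + 1 / 2 - ε) * t)⌉₊) →
            Fin (⌈(2 : ℝ) ^ (((3 * m : ℝ) / 8 + 1 / 2 - ε) * t)⌉₊) → Fin (m + 2),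
        (∀ x y, χ x y = χ y x) ∧
        ¬ ∃ (S : Finset (Fin (⌈(2 : ℝ) ^ (((3 * m : ℝ) / 8 + 1 / 2 - ε) * t)⌉₊)))
            (c : Fin (m + 2)), S.card = t ∧ ∀ x ∈ S, ∀ y ∈ S, x ≠ y → χ x y = c := by
  obtain ⟨n, hn⟩ := exists_nat_ge ((3 * m + 3) / ε)
  refine ⟨max n (6 * m + 6), fun t ht ↦ ?_⟩
  have hnt : (n : ℝ) ≤ t := mod_cast (le_max_left _ _).trans ht
  have hmt : (6 * m + 6 : ℝ) ≤ t := mod_cast (le_max_right _ _).trans ht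
  have hεt : 3 * m + 3 ≤ ε * t := (div_le_iff₀' hε).1 (hn.trans hnt)
  have hceil := natCeil_two_rpow_le (x := ((3 * m : ℝ) / 8 + 1 / 2 - ε) * t)
    (y := (3 * m / 8 + 1 / 2) * t - (3 * m + 3)) (by linarith)
    (by nlinarith [mul_nonneg m.cast_nonneg (t.cast_nonneg (α := ℝ))])
  exact hasCliqueFreeColoring_of_card_le_two_rpow (by omega)
    (by rw [Fintype.card_fin]; convert hceil using 2; ring)
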